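/- Let K be a field of characteristic different from 2, let d be an odd positive integer, and let I be an invariant of binary octics over K of degree d and weight 4d (the weight of a nonzero degree-d invariant of octics is necessarily 4d). If a binary octic f ∈ K[X,Z] is GL₂(K)-equivalent to a binary octic g with g(−X,Z) = −g(X,Z) — e.g. to the homogenization of x·(x²−1)·(x⁴+u·x²+v), the normal model of genus-3 hyperelliptic curves whose automorphism group contains the cyclic group C₄ — then I(f) = 0. In particular all the odd-degree Shioda invariants J₃, J₅, J₇, J₉ vanish at such an f. -/

import Mathlib

open MvPolynomial

/-- Iterated partial derivative in the variable `x` (the variable `0`). -/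
noncomputable def dX {k : Type*} [CommSemiring k] (n : ℕ) (p : MvPolynomial (Fin 2) k) :
    MvPolynomial (Fin 2) k :=
  (fun q => pderiv (0 : Fin 2) q)^[n] p

/-- Iterated partial derivative in the variable `z` (the variable `1`). -/
noncomputable def dZ {k : Type*} [CommSemiring k] (n : ℕ) (p : MvPolynomial (Fin 2) k) :
    MvPolynomial (Fin 2) k :=
  (fun q => pderiv (1 : Fin 2) q)^[n] p

/-- The `h`-th transvectant of two binary forms of degrees `r₁` and `r₂`. -/
noncomputable def transvectant {k : Type*} [Field k] (r₁ r₂ h : ℕ)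
    (f g : MvPolynomial (Fin 2) k) : MvPolynomial (Fin 2) k :=
  C ((((r₁ - h).factorial * (r₂ - h).factorial : ℕ) : k) /
      (((r₁.factorial * r₂.factorial : ℕ)) : k)) *
    ∑ j ∈ Finset.range (h + 1),
      C ((-1 : k) ^ j * (h.choose j : k)) * (dX (h - j) (dZ j f) * dX j (dZ (h - j) g))

section Shioda

variable {k : Type*} [Field k]

/-- The covariant `𝔤 = (f,f)₄` of a binary octic. -/
noncomputable def covG (f : MvPolynomial (Fin 2) k) := transvectant 8 8 4 f f

/-- The covariant `𝔨 = (f,f)₆` of a binary octic. -/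
noncomputable def covK (f : MvPolynomial (Fin 2) k) := transvectant 8 8 6 f f

/-- The covariant `𝔥 = (𝔨,𝔨)₂` of a binary octic. -/
noncomputable def covH (f : MvPolynomial (Fin 2) k) := transvectant 4 4 2 (covK f) (covK f)

/-- The covariant `𝔪 = (f,𝔨)₄` of a binary octic. -/
noncomputable def covM (f : MvPolynomial (Fin 2) k) := transvectant 8 4 4 f (covK f)

/-- The covariant `𝔫 = (f,𝔥)₄` of a binary octic. -/
noncomputable def covN (f : MvPolynomial (Fin 2) k) := transvectant 8 4 4 f (covH f)

/-- The covariant `𝔭 = (𝔤,𝔨)₄` of a binary octic. -/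
noncomputable def covP (f : MvPolynomial (Fin 2) k) := transvectant 8 4 4 (covG f) (covK f)

/-- The covariant `𝔮 = (𝔤,𝔥)₄` of a binary octic. -/
noncomputable def covQ (f : MvPolynomial (Fin 2) k) := transvectant 8 4 4 (covG f) (covH f)

/-- The Shioda invariant `J₂ = (f,f)₈`. -/
noncomputable def shJ2 (f : MvPolynomial (Fin 2) k) : k :=
  constantCoeff (transvectant 8 8 8 f f)

/-- The Shioda invariant `J₃ = (f,𝔤)₈`. -/
noncomputable def shJ3 (f : MvPolynomial (Fin 2) k) : k :=
  constantCoeff (transvectant 8 8 8 f (covG f))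

/-- The Shioda invariant `J₄ = (𝔨,𝔨)₄`. -/
noncomputable def shJ4 (f : MvPolynomial (Fin 2) k) : k :=
  constantCoeff (transvectant 4 4 4 (covK f) (covK f))

/-- The Shioda invariant `J₅ = (𝔪,𝔨)₄`. -/
noncomputable def shJ5 (f : MvPolynomial (Fin 2) k) : k :=
  constantCoeff (transvectant 4 4 4 (covM f) (covK f))

/-- The Shioda invariant `J₆ = (𝔨,𝔥)₄`. -/
noncomputable def shJ6 (f : MvPolynomial (Fin 2) k) : k :=
  constantCoeff (transvectant 4 4 4 (covK f) (covH f))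

/-- The Shioda invariant `J₇ = (𝔪,𝔥)₄`. -/
noncomputable def shJ7 (f : MvPolynomial (Fin 2) k) : k :=
  constantCoeff (transvectant 4 4 4 (covM f) (covH f))

/-- The Shioda invariant `J₈ = (𝔭,𝔥)₄`. -/
noncomputable def shJ8 (f : MvPolynomial (Fin 2) k) : k :=
  constantCoeff (transvectant 4 4 4 (covP f) (covH f))

/-- The Shioda invariant `J₉ = (𝔫,𝔥)₄`. -/
noncomputable def shJ9 (f : MvPolynomial (Fin 2) k) : k :=
  constantCoeff (transvectant 4 4 4 (covN f) (covH f))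

/-- The Shioda invariant `J₁₀ = (𝔮,𝔥)₄`. -/
noncomputable def shJ10 (f : MvPolynomial (Fin 2) k) : k :=
  constantCoeff (transvectant 4 4 4 (covQ f) (covH f))

end Shioda

/-- The action of a matrix `M` on binary forms: `(M.f)(x,z) = f(M⁻¹·(x,z))`. -/
noncomputable def matAct {K : Type*} [Field K] (M : Matrix (Fin 2) (Fin 2) K)
    (f : MvPolynomial (Fin 2) K) : MvPolynomial (Fin 2) K :=
  bind₁ (fun j : Fin 2 => C (M⁻¹ j 0) * X 0 + C (M⁻¹ j 1) * X 1) f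

/-!
An invariant of degree `d` and weight `ω` satisfies `I (-g) = (-1) ^ d * I g`, while the
substitution `x ↦ -x`, of determinant `-1`, gives `I (g (-x, z)) = (-1) ^ ω * I g`. If
`g (-x, z) = -g (x, z)` and `d + ω` is odd, these two values of the same quantity force `I g = 0`
in characteristic `≠ 2`, and the vanishing propagates to the whole `GL₂`-orbit of `g`.

That the Shioda invariants are invariants comes from Cayley's description of transvectants: the
`h`-th transvectant of `p` and `q` is, up to a constant, the image under multiplication of
`Ω ^ h (p ⊗ q)` with `Ω = ∂x ⊗ ∂z - ∂z ⊗ ∂x`, and applying `Ω` after the substitution `M` in both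
factors amounts, by the chain rule, to applying `det M • Ω` before it.
-/

open scoped TensorProduct

section Derivatives

variable {R σ : Type*} [CommSemiring R]

theorem derivation_aeval [Fintype σ] {A N : Type*} [CommSemiring A] [Algebra R A]
    [AddCommMonoid N] [Module R N] [Module A N] (D : Derivation R A N) (φ : σ → A)
    (p : MvPolynomial σ R) :
    D (aeval φ p) = ∑ j, aeval φ (pderiv j p) • D (φ j) := by
  classical
  induction p using MvPolynomial.induction_on with
  | C a => simp
  | add p q hp hq => simp only [map_add, hp, hq, add_smul, Finset.sum_add_distrib]
  | mul_X p i hp =>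
    simp only [map_mul, aeval_X, Derivation.leibniz, hp, smul_eq_mul, map_add, add_smul,
      Finset.sum_add_distrib, Finset.smul_sum, mul_smul, pderiv_X, Pi.single_apply]
    simp

theorem pderiv_pderiv_comm (i j : σ) (p : MvPolynomial σ R) :
    pderiv i (pderiv j p) = pderiv j (pderiv i p) := by
  obtain rfl | hij := eq_or_ne i j
  · rfl
  · ext m
    simp [coeff_pderiv, hij, hij.symm, add_right_comm, mul_right_comm]

theorem constantCoeff_bind₁ {τ : Type*} {φ : σ → MvPolynomial τ R}
    (hφ : ∀ i, constantCoeff (φ i) = 0) (p : MvPolynomial σ R) :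
    constantCoeff (bind₁ φ p) = constantCoeff p := by
  induction p using MvPolynomial.induction_on with
  | C a => simp
  | add p q hp hq => simp only [map_add, hp, hq]
  | mul_X p i _ => simp [hφ]

/-- The partial derivative `∂ / ∂Xᵢ` as an endomorphism of the module of polynomials, so that it can
be raised to powers and tensored. -/
noncomputable def pderivEnd (i : σ) : Module.End R (MvPolynomial σ R) :=
  (pderiv i).toLinearMap

@[simp]
theorem pderivEnd_apply (i : σ) (p : MvPolynomial σ R) : pderivEnd i p = pderiv i p := rfl

theorem commute_pderivEnd (i j : σ) : Commute (pderivEnd (R := R) i) (pderivEnd j) :=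
  LinearMap.ext (pderiv_pderiv_comm i j)

theorem dX_eq_pow_pderivEnd (n : ℕ) (p : MvPolynomial (Fin 2) R) :
    dX n p = (pderivEnd 0 ^ n) p := by
  rw [Module.End.pow_apply]; rfl

theorem dZ_eq_pow_pderivEnd (n : ℕ) (p : MvPolynomial (Fin 2) R) :
    dZ n p = (pderivEnd 1 ^ n) p := by
  rw [Module.End.pow_apply]; rfl

end Derivatives

section LinearSubstitution

variable {R : Type*} [CommSemiring R]

/-- The linear substitution `p ↦ p (a x + b z, c x + d z)` attached to the matrix
`M = !![a, b; c, d]`, which need not be invertible. -/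
noncomputable def linearSubst (M : Matrix (Fin 2) (Fin 2) R) :
    MvPolynomial (Fin 2) R →ₐ[R] MvPolynomial (Fin 2) R :=
  bind₁ fun j => C (M j 0) * X 0 + C (M j 1) * X 1

theorem pderiv_linearSubst (M : Matrix (Fin 2) (Fin 2) R) (i : Fin 2)
    (p : MvPolynomial (Fin 2) R) :
    pderiv i (linearSubst M p) =
      M 0 i • linearSubst M (pderiv 0 p) + M 1 i • linearSubst M (pderiv 1 p) := by
  have pderiv_row (j : Fin 2) : pderiv i (C (M j 0) * X 0 + C (M j 1) * X 1) = C (M j i) := by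
    fin_cases i <;> simp [pderiv_X]
  rw [linearSubst, bind₁, derivation_aeval, Fin.sum_univ_two]
  simp only [pderiv_row, smul_eq_C_mul, smul_eq_mul, mul_comm (C _) (aeval _ _)]

theorem constantCoeff_linearSubst (M : Matrix (Fin 2) (Fin 2) R) (p : MvPolynomial (Fin 2) R) :
    constantCoeff (linearSubst M p) = constantCoeff p :=
  constantCoeff_bind₁ (by simp) p

theorem linearSubst_one : linearSubst (1 : Matrix (Fin 2) (Fin 2) R) = AlgHom.id R _ := by
  ext j : 1
  fin_cases j <;> simp [linearSubst]

end LinearSubstitution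

section CayleyOmega

variable {R : Type*} [CommRing R]

/-- Cayley's omega operator `∂x ⊗ ∂z - ∂z ⊗ ∂x`, acting on polynomials in two pairs of variables,
encoded as the tensor square of the polynomials in one pair. -/
noncomputable def cayleyOmega :
    Module.End R (MvPolynomial (Fin 2) R ⊗[R] MvPolynomial (Fin 2) R) :=
  TensorProduct.map (pderivEnd 0) (pderivEnd 1) - TensorProduct.map (pderivEnd 1) (pderivEnd 0)

theorem cayleyOmega_pow_tmul (h : ℕ) (p q : MvPolynomial (Fin 2) R) :
    (cayleyOmega ^ h) (p ⊗ₜ[R] q) =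
      ∑ j ∈ Finset.range (h + 1),
        ((-1 : R) ^ j * (h.choose j : R)) •
          (dX (h - j) (dZ j p) ⊗ₜ[R] dX j (dZ (h - j) q)) := by
  set A : Module.End R (MvPolynomial (Fin 2) R ⊗[R] MvPolynomial (Fin 2) R) :=
    TensorProduct.map (pderivEnd 0) (pderivEnd 1) with hA
  set B : Module.End R (MvPolynomial (Fin 2) R ⊗[R] MvPolynomial (Fin 2) R) :=
    TensorProduct.map (pderivEnd 1) (pderivEnd 0) with hB
  have commute_BA : Commute B A := by
    rw [commute_iff_eq, hA, hB, ← TensorProduct.map_mul, ← TensorProduct.map_mul,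
      (commute_pderivEnd 1 0).eq, (commute_pderivEnd 0 1).eq]
  have term_apply (j : ℕ) :
      (B ^ j * A ^ (h - j)) (p ⊗ₜ[R] q) = dX (h - j) (dZ j p) ⊗ₜ[R] dX j (dZ (h - j) q) := by
    rw [hA, hB, TensorProduct.map_pow, TensorProduct.map_pow, ← TensorProduct.map_mul,
      ((commute_pderivEnd 1 0).pow_pow j (h - j)).eq, TensorProduct.map_tmul]
    simp only [Module.End.mul_apply, dX_eq_pow_pderivEnd, dZ_eq_pow_pderivEnd]
  have omega_pow : (cayleyOmega : Module.End R _) ^ h =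
      ∑ j ∈ Finset.range (h + 1), ((-1 : R) ^ j * (h.choose j : R)) • (B ^ j * A ^ (h - j)) := by
    have omega_eq : (cayleyOmega : Module.End R _) = (-1 : R) • B + A := by
      rw [cayleyOmega]; module
    rw [omega_eq, (commute_BA.smul_left (-1 : R)).add_pow]
    refine Finset.sum_congr rfl fun j _ => ?_
    rw [smul_pow, ← nsmul_eq_mul', ← Nat.cast_smul_eq_nsmul R, smul_mul_assoc, smul_smul, mul_comm]
  simp only [omega_pow, LinearMap.sum_apply, LinearMap.smul_apply, term_apply]

theorem semiconjBy_cayleyOmega (M : Matrix (Fin 2) (Fin 2) R) :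
    SemiconjBy (TensorProduct.map (linearSubst M).toLinearMap (linearSubst M).toLinearMap)
      (M.det • cayleyOmega) cayleyOmega := by
  refine TensorProduct.ext' fun p q => ?_
  simp only [Module.End.mul_apply, cayleyOmega, LinearMap.sub_apply, TensorProduct.map_tmul,
    LinearMap.smul_apply, map_sub, map_smul, AlgHom.toLinearMap_apply, pderivEnd_apply,
    pderiv_linearSubst, TensorProduct.add_tmul, TensorProduct.tmul_add,
    ← TensorProduct.smul_tmul', TensorProduct.tmul_smul, Matrix.det_fin_two]
  module

end CayleyOmega

section Transvectant

variable {K : Type*} [Field K]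

theorem transvectant_eq_cayleyOmega_pow (r s h : ℕ) (p q : MvPolynomial (Fin 2) K) :
    transvectant r s h p q =
      ((((r - h).factorial * (s - h).factorial : ℕ) : K) /
        ((r.factorial * s.factorial : ℕ) : K)) •
        LinearMap.mul' K _ ((cayleyOmega ^ h) (p ⊗ₜ[K] q)) := by
  simp only [transvectant, cayleyOmega_pow_tmul, map_sum, map_smul, LinearMap.mul'_apply,
    smul_eq_C_mul]

theorem transvectant_C_mul_C_mul (r s h : ℕ) (a b : K) (p q : MvPolynomial (Fin 2) K) :
    transvectant r s h (C a * p) (C b * q) = C (a * b) * transvectant r s h p q := by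
  simp only [transvectant_eq_cayleyOmega_pow, ← smul_eq_C_mul, TensorProduct.smul_tmul_smul,
    map_smul, smul_comm (a * b)]

theorem transvectant_linearSubst (M : Matrix (Fin 2) (Fin 2) K) (r s h : ℕ)
    (p q : MvPolynomial (Fin 2) K) :
    transvectant r s h (linearSubst M p) (linearSubst M q) =
      C (M.det ^ h) * linearSubst M (transvectant r s h p q) := by
  have omega_pow : (cayleyOmega ^ h) (linearSubst M p ⊗ₜ[K] linearSubst M q) =
      M.det ^ h • TensorProduct.map (linearSubst M).toLinearMap (linearSubst M).toLinearMap
        ((cayleyOmega ^ h) (p ⊗ₜ[K] q)) := by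
    simpa [smul_pow] using
      (LinearMap.congr_fun ((semiconjBy_cayleyOmega M).pow_right h).eq (p ⊗ₜ[K] q)).symm
  have mul'_map (t : MvPolynomial (Fin 2) K ⊗[K] MvPolynomial (Fin 2) K) :
      LinearMap.mul' K _
          (TensorProduct.map (linearSubst M).toLinearMap (linearSubst M).toLinearMap t) =
        linearSubst M (LinearMap.mul' K _ t) :=
    (LinearMap.congr_fun (AlgHom.comp_mul' (linearSubst M)) t).symm
  simp only [transvectant_eq_cayleyOmega_pow, omega_pow, map_smul, mul'_map, ← smul_eq_C_mul,
    smul_comm (M.det ^ h)]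

end Transvectant

section Covariant

variable {K : Type*} [Field K]

/-- `Φ` behaves like a covariant of binary forms of degree `d` and weight `w`. The compatibility is
required for arbitrary polynomials and matrices, so neither the degree of the forms nor the order of
the covariant is recorded. -/
def IsBinaryFormCovariant (d w : ℕ)
    (Φ : MvPolynomial (Fin 2) K → MvPolynomial (Fin 2) K) : Prop :=
  ∀ (c : K) (M : Matrix (Fin 2) (Fin 2) K) (p : MvPolynomial (Fin 2) K),
    Φ (C c * linearSubst M p) = C (c ^ d * M.det ^ w) * linearSubst M (Φ p)

theorem isBinaryFormCovariant_id :
    IsBinaryFormCovariant 1 0 (id : MvPolynomial (Fin 2) K → MvPolynomial (Fin 2) K) := by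
  simp [IsBinaryFormCovariant]

protected theorem IsBinaryFormCovariant.transvectant {d₁ d₂ w₁ w₂ : ℕ}
    {Φ Ψ : MvPolynomial (Fin 2) K → MvPolynomial (Fin 2) K} (hΦ : IsBinaryFormCovariant d₁ w₁ Φ)
    (hΨ : IsBinaryFormCovariant d₂ w₂ Ψ) (r s h : ℕ) :
    IsBinaryFormCovariant (d₁ + d₂) (w₁ + w₂ + h) fun p => transvectant r s h (Φ p) (Ψ p) := by
  intro c M p
  beta_reduce
  rw [hΦ c M p, hΨ c M p, transvectant_C_mul_C_mul, transvectant_linearSubst, ← mul_assoc, ← C_mul]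
  ring_nf

theorem isBinaryFormCovariant_covG : IsBinaryFormCovariant 2 4 (covG (k := K)) :=
  isBinaryFormCovariant_id.transvectant isBinaryFormCovariant_id 8 8 4

theorem isBinaryFormCovariant_covK : IsBinaryFormCovariant 2 6 (covK (k := K)) :=
  isBinaryFormCovariant_id.transvectant isBinaryFormCovariant_id 8 8 6

theorem isBinaryFormCovariant_covH : IsBinaryFormCovariant 4 14 (covH (k := K)) :=
  isBinaryFormCovariant_covK.transvectant isBinaryFormCovariant_covK 4 4 2

theorem isBinaryFormCovariant_covM : IsBinaryFormCovariant 3 10 (covM (k := K)) :=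
  isBinaryFormCovariant_id.transvectant isBinaryFormCovariant_covK 8 4 4

theorem isBinaryFormCovariant_covN : IsBinaryFormCovariant 5 18 (covN (k := K)) :=
  isBinaryFormCovariant_id.transvectant isBinaryFormCovariant_covH 8 4 4

end Covariant

section Invariant

variable {K : Type*} [Field K] {n d : ℕ} {ω : ℤ} {I : MvPolynomial (Fin 2) K → K}

/-- `I` behaves like an invariant of degree `d` and weight `ω` of binary `n`-forms. Homogeneity of
degree `d` is only required under scalar multiplication; `I` is not assumed to be polynomial in the
coefficients. -/
structure IsBinaryFormInvariant (n d : ℕ) (ω : ℤ) (I : MvPolynomial (Fin 2) K → K) : Prop where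
  map_C_mul : ∀ (c : K) (p : MvPolynomial (Fin 2) K), p.IsHomogeneous n →
    I (C c * p) = c ^ d * I p
  map_matAct : ∀ M : Matrix (Fin 2) (Fin 2) K, IsUnit M.det →
    ∀ p : MvPolynomial (Fin 2) K, p.IsHomogeneous n → I (matAct M p) = M.det ^ (-ω) * I p

theorem IsBinaryFormCovariant.isBinaryFormInvariant_constantCoeff {w : ℕ}
    {Φ : MvPolynomial (Fin 2) K → MvPolynomial (Fin 2) K} (hΦ : IsBinaryFormCovariant d w Φ)
    (n : ℕ) : IsBinaryFormInvariant n d w fun p => constantCoeff (Φ p) where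
  map_C_mul c p _ := by simpa [linearSubst_one] using congrArg constantCoeff (hΦ c 1 p)
  map_matAct M _ p _ := by
    have h := congrArg constantCoeff (hΦ 1 M⁻¹ p)
    simp only [C_1, one_mul, one_pow, map_mul, constantCoeff_C, constantCoeff_linearSubst,
      Matrix.det_nonsing_inv, Ring.inverse_eq_inv'] at h
    rwa [zpow_neg, zpow_natCast, ← inv_pow]

theorem isBinaryFormInvariant_shJ3 : IsBinaryFormInvariant 8 3 12 (shJ3 (k := K)) :=
  (isBinaryFormCovariant_id.transvectant isBinaryFormCovariant_covG
    8 8 8).isBinaryFormInvariant_constantCoeff 8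

theorem isBinaryFormInvariant_shJ5 : IsBinaryFormInvariant 8 5 20 (shJ5 (k := K)) :=
  (isBinaryFormCovariant_covM.transvectant isBinaryFormCovariant_covK
    4 4 4).isBinaryFormInvariant_constantCoeff 8

theorem isBinaryFormInvariant_shJ7 : IsBinaryFormInvariant 8 7 28 (shJ7 (k := K)) :=
  (isBinaryFormCovariant_covM.transvectant isBinaryFormCovariant_covH
    4 4 4).isBinaryFormInvariant_constantCoeff 8

theorem isBinaryFormInvariant_shJ9 : IsBinaryFormInvariant 8 9 36 (shJ9 (k := K)) :=
  (isBinaryFormCovariant_covN.transvectant isBinaryFormCovariant_covH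
    4 4 4).isBinaryFormInvariant_constantCoeff 8

namespace IsBinaryFormInvariant

variable {M : Matrix (Fin 2) (Fin 2) K} {p : MvPolynomial (Fin 2) K}

theorem map_linearSubst (hI : IsBinaryFormInvariant n d ω I) (hM : IsUnit M.det)
    (hp : p.IsHomogeneous n) : I (linearSubst M p) = M.det ^ ω * I p := by
  have matAct_inv : matAct M⁻¹ p = linearSubst M p := by
    rw [matAct, Matrix.nonsing_inv_nonsing_inv M hM, linearSubst]
  rw [← matAct_inv, hI.map_matAct _ (M.isUnit_nonsing_inv_det hM) p hp, Matrix.det_nonsing_inv,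
    Ring.inverse_eq_inv', inv_zpow', neg_neg]

theorem eq_zero_of_linearSubst_eq_C_mul (hI : IsBinaryFormInvariant n d ω I) (hM : IsUnit M.det)
    (hp : p.IsHomogeneous n) {c : K} (hMp : linearSubst M p = C c * p)
    (hc : c ^ d ≠ M.det ^ ω) : I p = 0 := by
  have h : c ^ d * I p = M.det ^ ω * I p := by
    rw [← hI.map_C_mul c p hp, ← hMp, hI.map_linearSubst hM hp]
  exact (mul_eq_mul_right_iff.mp h).resolve_left hc

theorem eq_zero_of_odd_in_X (hI : IsBinaryFormInvariant n d ω I) (hdω : Odd (d + ω))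
    (h2 : (2 : K) ≠ 0) (hp : p.IsHomogeneous n)
    (hodd : bind₁ (fun j : Fin 2 => if j = 0 then -(X 0) else X 1) p = -p) : I p = 0 := by
  set D : Matrix (Fin 2) (Fin 2) K := !![-1, 0; 0, 1]
  have det_D : D.det = -1 := by simp [D]
  have linearSubst_D : linearSubst D p = C (-1) * p := by
    rw [C_neg, C_1, neg_one_mul, ← hodd, linearSubst]
    congr 2
    funext j
    fin_cases j <;> simp [D]
  have opposite_signs : (-1 : K) ^ d ≠ (-1) ^ ω := by
    have hprod : (-1 : K) ^ d * (-1) ^ ω = -1 := by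
      rw [← zpow_natCast, ← zpow_add₀ (neg_ne_zero.mpr one_ne_zero), hdω.neg_one_zpow]
    intro heq
    rw [← heq, ← mul_pow, neg_one_mul, neg_neg, one_pow] at hprod
    exact h2 (by linear_combination hprod)
  exact hI.eq_zero_of_linearSubst_eq_C_mul (by simp [det_D]) hp linearSubst_D
    (det_D ▸ opposite_signs)

end IsBinaryFormInvariant

end Invariant

/-- Let `K` be a field of characteristic `≠ 2` and suppose the binary octic `f` is
`GL₂(K)`-equivalent to an octic `g` with `g(−X,Z) = −g(X,Z)` (e.g. to the normal model
`x·(x²−1)·(x⁴+u·x²+v)` of curves whose automorphism group contains `C₄`).  Then every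
invariant `I` of binary octics of odd degree `d` and weight `4d` vanishes at `f`; in
particular the odd-degree Shioda invariants `J₃, J₅, J₇, J₉` vanish at `f`. -/
theorem statement12 {K : Type*} [Field K] (hchar : (2 : K) ≠ 0)
    (f g : MvPolynomial (Fin 2) K) (hf : f.IsHomogeneous 8) (hg : g.IsHomogeneous 8)
    (hodd : bind₁ (fun j : Fin 2 => if j = 0 then -(X 0) else X 1) g = -g)
    (hequiv : ∃ M : Matrix (Fin 2) (Fin 2) K, IsUnit M.det ∧
      f = bind₁ (fun j : Fin 2 => C (M j 0) * X 0 + C (M j 1) * X 1) g) :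
    (∀ d : ℕ, Odd d → ∀ Inv : MvPolynomial (Fin 2) K → K,
      (∀ (c : K) (p : MvPolynomial (Fin 2) K), p.IsHomogeneous 8 →
        Inv (C c * p) = c ^ d * Inv p) →
      (∀ M : Matrix (Fin 2) (Fin 2) K, IsUnit M.det →
        ∀ p : MvPolynomial (Fin 2) K, p.IsHomogeneous 8 →
          Inv (matAct M p) = M.det ^ (-(4 * (d : ℤ))) * Inv p) →
      Inv f = 0) ∧
    shJ3 f = 0 ∧ shJ5 f = 0 ∧ shJ7 f = 0 ∧ shJ9 f = 0 := by
  obtain ⟨M, hM, hfM⟩ := hequiv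
  have vanishing {d : ℕ} {ω : ℤ} {I : MvPolynomial (Fin 2) K → K}
      (hI : IsBinaryFormInvariant 8 d ω I) (hdω : Odd (d + ω)) : I f = 0 := by
    have hIg : I g = 0 := hI.eq_zero_of_odd_in_X hdω hchar hg hodd
    rw [hfM, ← linearSubst, hI.map_linearSubst hM hg, hIg, mul_zero]
  refine ⟨fun d hd Inv hscal hact => vanishing ⟨hscal, hact⟩ ?_,
    vanishing isBinaryFormInvariant_shJ3 (by decide),
    vanishing isBinaryFormInvariant_shJ5 (by decide),
    vanishing isBinaryFormInvariant_shJ7 (by decide),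
    vanishing isBinaryFormInvariant_shJ9 (by decide)⟩
  exact (hd.natCast (R := ℤ)).add_even ((by decide : Even (4 : ℤ)).mul_right _)
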